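/- For all η₁, η₂ > 0 such that T₁(η₁) > 0, T₂(η₂) > 0 and S(η₁,η₂) > 0, the double Laplace transform of the mixed moment satisfies ∫₀^∞ ∫₀^∞ e^{−η₁t₁−η₂t₂} E[L₁(t₁) L₂(t₂)] dt₁ dt₂ = (T₁(η₁) + T₂(η₂)) / (η₁ η₂ T₁(η₁) T₂(η₂) S(η₁,η₂)). -/

import Mathlib

open MeasureTheory ProbabilityTheory

lemma aux_exp {a : ℝ} (ha : 0 < a) (c : ℝ) :
    ∫⁻ t in Set.Ioi c, ENNReal.ofReal (Real.exp (-(a * t)))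
      = ENNReal.ofReal (Real.exp (-(a * c)) / a) := by
  have h := integrableOn_exp_mul_Ioi (neg_lt_zero.2 ha) c
  have h2 := integral_exp_mul_Ioi (neg_lt_zero.2 ha) c
  rw [← neg_div_neg_eq, neg_neg, neg_neg] at h2
  have h3 := ofReal_integral_eq_lintegral_ofReal h (ae_of_all _ fun x => (Real.exp_pos _).le)
  rw [h2] at h3
  simp only [neg_mul] at h3
  exact h3.symm

lemma aux_shift {a b : ℝ} (hb : 0 < b) (x : ℝ) :
    ∫⁻ y in Set.Ioi x, ENNReal.ofReal (Real.exp (-(a * x) - b * (y - x)))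
      = ENNReal.ofReal (Real.exp (-(a * x))) * ENNReal.ofReal (1 / b) := by
  have : ∀ y, ENNReal.ofReal (Real.exp (-(a * x) - b * (y - x)))
      = ENNReal.ofReal (Real.exp (-(a * x) + b * x)) * ENNReal.ofReal (Real.exp (-(b * y))) := by
    intro y
    rw [← ENNReal.ofReal_mul (Real.exp_pos _).le, ← Real.exp_add]
    ring_nf
  simp only [this]
  rw [lintegral_const_mul' _ _ ENNReal.ofReal_ne_top, aux_exp hb,
    ← ENNReal.ofReal_mul (Real.exp_pos _).le, ← ENNReal.ofReal_mul (Real.exp_pos _).le,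
    ← mul_div_assoc, ← Real.exp_add]
  ring_nf

lemma aux_dbl {a b : ℝ} (ha : 0 < a) (hb : 0 < b) :
    ∫⁻ x in Set.Ioi (0:ℝ), ∫⁻ y in Set.Ioi (0:ℝ),
      (if x < y then ENNReal.ofReal (Real.exp (-(a * x) - b * (y - x))) else 0)
      = ENNReal.ofReal (1 / (a * b)) := by
  have h : ∀ x ∈ Set.Ioi (0:ℝ), ∫⁻ y in Set.Ioi (0:ℝ),
      (if x < y then ENNReal.ofReal (Real.exp (-(a * x) - b * (y - x))) else 0)
      = ENNReal.ofReal (Real.exp (-(a * x))) * ENNReal.ofReal (1 / b) := by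
    intro x hx
    have e : (fun y => if x < y then ENNReal.ofReal (Real.exp (-(a * x) - b * (y - x))) else 0)
      = (Set.Ioi x).indicator
        (fun y => ENNReal.ofReal (Real.exp (-(a * x) - b * (y - x)))) := by
      ext y; simp [Set.indicator]
    rw [e, setLIntegral_indicator measurableSet_Ioi, Set.Ioi_inter_Ioi,
      show x ⊔ 0 = x from max_eq_left (le_of_lt hx), aux_shift hb]
  rw [setLIntegral_congr_fun measurableSet_Ioi h,
    lintegral_mul_const' _ _ ENNReal.ofReal_ne_top, aux_exp ha,
    ← ENNReal.ofReal_mul (by positivity)]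
  congr 1
  simp
  ring

lemma aux_dbl' {a b : ℝ} (ha : 0 < a) (hb : 0 < b) :
    ∫⁻ x in Set.Ioi (0:ℝ), ∫⁻ y in Set.Ioi (0:ℝ),
      (if x ≤ y then ENNReal.ofReal (Real.exp (-(a * x) - b * (y - x))) else 0)
      = ENNReal.ofReal (1 / (a * b)) := by
  rw [← aux_dbl ha hb]
  refine lintegral_congr fun x => lintegral_congr_ae ?_
  have : ∀ᵐ y ∂(volume.restrict (Set.Ioi (0:ℝ))), y ≠ x :=
    ae_restrict_of_ae (Measure.ae_ne volume x)
  filter_upwards [this] with y hy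
  have : x ≤ y ↔ x < y := ⟨fun h => lt_of_le_of_ne h hy.symm, le_of_lt⟩
  simp only [this]

lemma aux_lap {a : ℝ} (ha : 0 < a) (h : ℝ) (hh : 0 ≤ h) :
    ∫⁻ t in Set.Ioi (0:ℝ), ENNReal.ofReal (Real.exp (-(a * t))) * (if h ≤ t then 1 else 0)
      = ENNReal.ofReal (1 / a) * ENNReal.ofReal (Real.exp (-(a * h))) := by
  have e : (fun t => ENNReal.ofReal (Real.exp (-(a * t))) * (if h ≤ t then 1 else 0))
      = (Set.Ici h).indicator (fun t => ENNReal.ofReal (Real.exp (-(a * t)))) := by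
    ext y; simp [Set.indicator]
  have e2 : (Set.Ici h ∩ Set.Ioi 0 : Set ℝ) =ᵐ[volume] Set.Ioi h := by
    have h1 : (Set.Ici h ∩ Set.Ioi 0 : Set ℝ) =ᵐ[volume] (Set.Ioi h ∩ Set.Ioi 0 : Set ℝ) :=
      Filter.EventuallyEq.inter Ioi_ae_eq_Ici.symm (Filter.EventuallyEq.refl _ _)
    rwa [Set.Ioi_inter_Ioi, show h ⊔ 0 = h from max_eq_left hh] at h1
  rw [e, setLIntegral_indicator measurableSet_Ici, setLIntegral_congr e2, aux_exp ha,
    ← ENNReal.ofReal_mul (by positivity)]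
  ring_nf

lemma aux_inv (f : ℝ → ℝ) (hm : ∀ x y : ℝ, 0 ≤ x → x ≤ y → f x ≤ f y)
    (hu : ∀ M : ℝ, ∃ x : ℝ, 0 ≤ x ∧ f x > M) (t : ℝ) :
    ∫⁻ x in Set.Ioi (0:ℝ), (if f x ≤ t then (1:ENNReal) else 0)
      = ENNReal.ofReal (sInf {x : ℝ | 0 ≤ x ∧ f x > t}) := by
  set L := sInf {x : ℝ | 0 ≤ x ∧ f x > t} with hL
  have hbdd : BddBelow {x : ℝ | 0 ≤ x ∧ f x > t} := ⟨0, fun x hx => hx.1⟩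
  have hne : {x : ℝ | 0 ≤ x ∧ f x > t}.Nonempty := hu t
  have h : ∀ᵐ x ∂(volume.restrict (Set.Ioi (0:ℝ))),
      (if f x ≤ t then (1:ENNReal) else 0) = (Set.Ioo 0 L).indicator (fun _ => 1) x := by
    have : ∀ᵐ y ∂(volume.restrict (Set.Ioi (0:ℝ))), y ≠ L :=
      ae_restrict_of_ae (Measure.ae_ne volume L)
    filter_upwards [this, ae_restrict_mem measurableSet_Ioi] with x hx hx0
    have hx0' : 0 < x := hx0
    have : f x ≤ t ↔ x ∈ Set.Ioo 0 L := by
      constructor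
      · intro hf
        refine ⟨hx0', lt_of_le_of_ne (le_csInf hne ?_) hx⟩
        rintro y ⟨hy, hy2⟩
        by_contra hlt
        have := hm y x hy (not_le.1 hlt).le
        linarith
      · rintro ⟨_, h2⟩
        by_contra hf
        have := csInf_le hbdd (show x ∈ {x : ℝ | 0 ≤ x ∧ f x > t} from ⟨hx0'.le, not_le.1 hf⟩)
        linarith
    simp only [this, Set.indicator]
  rw [lintegral_congr_ae h, setLIntegral_indicator measurableSet_Ioo]
  have : Set.Ioo 0 L ∩ Set.Ioi 0 = Set.Ioo 0 L := Set.inter_eq_left.2 fun x hx => hx.1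
  rw [this]
  simp

lemma aux_mean {Ω : Type*} [MeasurableSpace Ω] (P : Measure Ω) [IsProbabilityMeasure P]
    (H1 H2 : ℝ → Ω → ℝ) (S : ℝ → ℝ → ℝ)
    (hH1meas : Measurable (Function.uncurry H1))
    (hH2meas : Measurable (Function.uncurry H2))
    (hzero : ∀ᵐ ω ∂P, H1 0 ω = 0 ∧ H2 0 ω = 0)
    (hindep : ∀ s t : ℝ, 0 ≤ s → s ≤ t →
      IndepFun (fun ω => (H1 t ω - H1 s ω, H2 t ω - H2 s ω))
        (fun ω => (H1 s ω, H2 s ω)) P)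
    (hincr : ∀ s t α β : ℝ, 0 ≤ s → s ≤ t → 0 ≤ α → 0 ≤ β →
      ∫ ω, Real.exp (-(α * (H1 t ω - H1 s ω)) - β * (H2 t ω - H2 s ω)) ∂P
        = Real.exp (-(t - s) * S α β))
    (s t a b a' b' : ℝ) (hs : 0 ≤ s) (hst : s ≤ t) (ha : 0 ≤ a) (hb : 0 ≤ b)
    (ha' : 0 ≤ a') (hb' : 0 ≤ b') :
    ∫⁻ ω, ENNReal.ofReal (Real.exp (-(a' * (H1 t ω - H1 s ω)) - b' * (H2 t ω - H2 s ω)) *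
      Real.exp (-(a * H1 s ω) - b * H2 s ω)) ∂P
      = ENNReal.ofReal (Real.exp (-(S a b * s) - S a' b' * (t - s))) := by
  have m1 : ∀ x, Measurable (H1 x) := fun x => hH1meas.comp measurable_prodMk_left
  have m2 : ∀ x, Measurable (H2 x) := fun x => hH2meas.comp measurable_prodMk_left
  have key : ∀ s t a b : ℝ, 0 ≤ s → s ≤ t → 0 ≤ a → 0 ≤ b →
      ∫⁻ ω, ENNReal.ofReal (Real.exp (-(a * (H1 t ω - H1 s ω)) - b * (H2 t ω - H2 s ω))) ∂P
      = ENNReal.ofReal (Real.exp (-(t - s) * S a b)) := by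
    intro s t a b hs hst ha hb
    rw [← hincr s t a b hs hst ha hb, ofReal_integral_eq_lintegral_ofReal _
      (ae_of_all _ fun x => (Real.exp_pos _).le)]
    by_contra hni
    have := hincr s t a b hs hst ha hb
    rw [integral_undef hni] at this
    exact (Real.exp_pos _).ne this
  have key0 : ∫⁻ ω, ENNReal.ofReal (Real.exp (-(a * H1 s ω) - b * H2 s ω)) ∂P
      = ENNReal.ofReal (Real.exp (-(s - 0) * S a b)) := by
    rw [← key 0 s a b le_rfl hs ha hb]
    refine lintegral_congr_ae ?_
    filter_upwards [hzero] with ω hω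
    simp [hω.1, hω.2]
  have hφ : ∀ a b : ℝ, Measurable fun p : ℝ × ℝ =>
      ENNReal.ofReal (Real.exp (-(a * p.1) - b * p.2)) := by
    intro a b; fun_prop
  have hi := (hindep s t hs hst).comp (hφ a' b') (hφ a b)
  have := lintegral_mul_eq_lintegral_mul_lintegral_of_indepFun
    ((hφ a' b').comp (((m1 t).sub (m1 s)).prodMk ((m2 t).sub (m2 s))))
    ((hφ a b).comp ((m1 s).prodMk (m2 s))) hi
  simp only [Pi.mul_apply, Function.comp_apply, Pi.sub_apply] at this
  rw [key0, key s t a' b' hs hst ha' hb'] at this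
  simp only [ENNReal.ofReal_mul (Real.exp_pos _).le]
  rw [this, ← ENNReal.ofReal_mul (Real.exp_pos _).le, ← Real.exp_add]
  ring_nf

lemma aux_total {Ω : Type*} [MeasurableSpace Ω] (P : Measure Ω) [IsProbabilityMeasure P]
    (H1 H2 : ℝ → Ω → ℝ) (S : ℝ → ℝ → ℝ)
    (hH1meas : Measurable (Function.uncurry H1))
    (hH2meas : Measurable (Function.uncurry H2))
    (hzero : ∀ᵐ ω ∂P, H1 0 ω = 0 ∧ H2 0 ω = 0)
    (hindep : ∀ s t : ℝ, 0 ≤ s → s ≤ t →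
      IndepFun (fun ω => (H1 t ω - H1 s ω, H2 t ω - H2 s ω))
        (fun ω => (H1 s ω, H2 s ω)) P)
    (hincr : ∀ s t α β : ℝ, 0 ≤ s → s ≤ t → 0 ≤ α → 0 ≤ β →
      ∫ ω, Real.exp (-(α * (H1 t ω - H1 s ω)) - β * (H2 t ω - H2 s ω)) ∂P
        = Real.exp (-(t - s) * S α β))
    (η1 η2 : ℝ) (hη1 : 0 < η1) (hη2 : 0 < η2)
    (hT1 : 0 < S η1 0) (hT2 : 0 < S 0 η2) (hS : 0 < S η1 η2) :
    ∫⁻ x in Set.Ioi (0:ℝ), ∫⁻ y in Set.Ioi (0:ℝ), ∫⁻ ω,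
      ENNReal.ofReal (Real.exp (-(η1 * H1 x ω))) * ENNReal.ofReal (Real.exp (-(η2 * H2 y ω))) ∂P
      = ENNReal.ofReal ((S η1 0 + S 0 η2) / (S η1 0 * S 0 η2 * S η1 η2)) := by
  have h : ∀ x ∈ Set.Ioi (0:ℝ), ∀ y ∈ Set.Ioi (0:ℝ), ∫⁻ ω,
      ENNReal.ofReal (Real.exp (-(η1 * H1 x ω))) * ENNReal.ofReal (Real.exp (-(η2 * H2 y ω))) ∂P
      = (if x < y then ENNReal.ofReal (Real.exp (-(S η1 η2 * x) - S 0 η2 * (y - x))) else 0)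
       + (if y ≤ x then ENNReal.ofReal (Real.exp (-(S η1 η2 * y) - S η1 0 * (x - y))) else 0) := by
    intro x hx y hy
    have hx' : 0 < x := hx
    have hy' : 0 < y := hy
    by_cases hxy : x < y
    · rw [if_pos hxy, if_neg (not_le.2 hxy), add_zero,
        ← aux_mean P H1 H2 S hH1meas hH2meas hzero hindep hincr x y η1 η2 0 η2 hx'.le hxy.le
          hη1.le hη2.le le_rfl hη2.le]
      refine lintegral_congr fun ω => ?_
      rw [← ENNReal.ofReal_mul (Real.exp_pos _).le, ← Real.exp_add, ← Real.exp_add]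
      ring_nf
    · rw [if_neg hxy, if_pos (not_lt.1 hxy), zero_add,
        ← aux_mean P H1 H2 S hH1meas hH2meas hzero hindep hincr y x η1 η2 η1 0 hy'.le
          (not_lt.1 hxy) hη1.le hη2.le hη1.le le_rfl]
      refine lintegral_congr fun ω => ?_
      rw [← ENNReal.ofReal_mul (Real.exp_pos _).le, ← Real.exp_add, ← Real.exp_add]
      ring_nf
  rw [setLIntegral_congr_fun measurableSet_Ioi fun x hx =>
    setLIntegral_congr_fun measurableSet_Ioi (h x hx)]
  have mA : Measurable (fun p : ℝ × ℝ => if p.1 < p.2 then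
      ENNReal.ofReal (Real.exp (-(S η1 η2 * p.1) - S 0 η2 * (p.2 - p.1))) else 0) :=
    Measurable.ite (measurableSet_lt measurable_fst measurable_snd) (by fun_prop) measurable_const
  have mB : Measurable (fun p : ℝ × ℝ => if p.2 ≤ p.1 then
      ENNReal.ofReal (Real.exp (-(S η1 η2 * p.2) - S η1 0 * (p.1 - p.2))) else 0) :=
    Measurable.ite (measurableSet_le measurable_snd measurable_fst) (by fun_prop) measurable_const
  have hsum : ∀ x : ℝ, ∫⁻ y in Set.Ioi (0:ℝ),
      ((if x < y then ENNReal.ofReal (Real.exp (-(S η1 η2 * x) - S 0 η2 * (y - x))) else 0)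
       + (if y ≤ x then ENNReal.ofReal (Real.exp (-(S η1 η2 * y) - S η1 0 * (x - y))) else 0))
      = (∫⁻ y in Set.Ioi (0:ℝ),
      (if x < y then ENNReal.ofReal (Real.exp (-(S η1 η2 * x) - S 0 η2 * (y - x))) else 0))
       + ∫⁻ y in Set.Ioi (0:ℝ),
        (if y ≤ x then ENNReal.ofReal (Real.exp (-(S η1 η2 * y) - S η1 0 * (x - y))) else 0) :=
    fun x => lintegral_add_left (mA.comp measurable_prodMk_left) _
  simp only [hsum]
  rw [lintegral_add_left mA.lintegral_prod_right', aux_dbl hS hT2,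
    lintegral_lintegral_swap mB.aemeasurable, aux_dbl' hS hT1,
    ← ENNReal.ofReal_add (by positivity) (by positivity)]
  congr 1
  field_simp

set_option maxHeartbeats 2000000 in
theorem laplace_transform_mixed_moment
    {Ω : Type*} [MeasurableSpace Ω] (P : Measure Ω) [IsProbabilityMeasure P]
    (H1 H2 : ℝ → Ω → ℝ) (S : ℝ → ℝ → ℝ)
    (hH1meas : Measurable (Function.uncurry H1))
    (hH2meas : Measurable (Function.uncurry H2))
    (hH1nonneg : ∀ x ω, 0 ≤ H1 x ω) (hH2nonneg : ∀ x ω, 0 ≤ H2 x ω)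
    (hzero : ∀ᵐ ω ∂P, H1 0 ω = 0 ∧ H2 0 ω = 0)
    (hSnonneg : ∀ α β : ℝ, 0 ≤ α → 0 ≤ β → 0 ≤ S α β)
    (hindep : ∀ s t : ℝ, 0 ≤ s → s ≤ t →
      IndepFun (fun ω => (H1 t ω - H1 s ω, H2 t ω - H2 s ω))
        (fun ω => (H1 s ω, H2 s ω)) P)
    (hincr : ∀ s t α β : ℝ, 0 ≤ s → s ≤ t → 0 ≤ α → 0 ≤ β →
      ∫ ω, Real.exp (-(α * (H1 t ω - H1 s ω)) - β * (H2 t ω - H2 s ω)) ∂P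
        = Real.exp (-(t - s) * S α β))
    (hpath : ∀ᵐ ω ∂P,
      (∀ x y : ℝ, 0 ≤ x → x ≤ y → H1 x ω ≤ H1 y ω) ∧
      (∀ M : ℝ, ∃ x : ℝ, 0 ≤ x ∧ H1 x ω > M) ∧
      (∀ x y : ℝ, 0 ≤ x → x ≤ y → H2 x ω ≤ H2 y ω) ∧
      (∀ M : ℝ, ∃ x : ℝ, 0 ≤ x ∧ H2 x ω > M))
    (L1 L2 : ℝ → Ω → ℝ)
    (hL1 : ∀ t ω, L1 t ω = sInf {x : ℝ | 0 ≤ x ∧ H1 x ω > t})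
    (hL2 : ∀ t ω, L2 t ω = sInf {x : ℝ | 0 ≤ x ∧ H2 x ω > t})
    (η1 η2 : ℝ) (hη1 : 0 < η1) (hη2 : 0 < η2)
    (hT1 : 0 < S η1 0) (hT2 : 0 < S 0 η2) (hS : 0 < S η1 η2) :
    ∫ t1 in Set.Ioi (0 : ℝ), ∫ t2 in Set.Ioi (0 : ℝ),
        Real.exp (-(η1 * t1) - η2 * t2) * (∫ ω, L1 t1 ω * L2 t2 ω ∂P)
      = (S η1 0 + S 0 η2) / (η1 * η2 * S η1 0 * S 0 η2 * S η1 η2) := by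
  have mI : ∀ H : ℝ → Ω → ℝ, Measurable (Function.uncurry H) →
      Measurable (fun p : (ℝ × Ω) × ℝ => if H p.2 p.1.2 ≤ p.1.1 then (1:ENNReal) else 0) := by
    intro H hH
    refine Measurable.ite (measurableSet_le ?_ (by fun_prop)) measurable_const measurable_const
    exact hH.comp (measurable_snd.prodMk (measurable_snd.comp measurable_fst))
  have mE : ∀ (a : ℝ) (H : ℝ → Ω → ℝ), Measurable (Function.uncurry H) →
      Measurable (fun p : ℝ × Ω => ENNReal.ofReal (Real.exp (-(a * H p.1 p.2)))) := by
    intro a H hH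
    have : Measurable (fun p : ℝ × Ω => H p.1 p.2) := hH
    fun_prop
  let A : (ℝ → Ω → ℝ) → ℝ → Ω → ENNReal := fun H t ω =>
    ∫⁻ x in Set.Ioi (0:ℝ), (if H x ω ≤ t then (1:ENNReal) else 0)
  have mA : ∀ H : ℝ → Ω → ℝ, Measurable (Function.uncurry H) →
      Measurable (fun p : ℝ × Ω => A H p.1 p.2) := fun H hH => (mI H hH).lintegral_prod_right'
  have hA : ∀ᵐ ω ∂P, ∀ t, A H1 t ω = ENNReal.ofReal (L1 t ω) ∧
      A H2 t ω = ENNReal.ofReal (L2 t ω) := by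
    filter_upwards [hpath] with ω hω t
    rw [hL1, hL2]
    exact ⟨aux_inv (fun x => H1 x ω) hω.1 hω.2.1 t, aux_inv (fun x => H2 x ω) hω.2.2.1 hω.2.2.2 t⟩
  have nn1 : ∀ t ω, 0 ≤ L1 t ω := fun t ω => by
    rw [hL1]; exact Real.sInf_nonneg fun x hx => hx.1
  have nn2 : ∀ t ω, 0 ≤ L2 t ω := fun t ω => by
    rw [hL2]; exact Real.sInf_nonneg fun x hx => hx.1
  -- the Laplace transform of `A`
  have lapA : ∀ (a : ℝ) (H : ℝ → Ω → ℝ), 0 < a → Measurable (Function.uncurry H) →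
      (∀ x ω, 0 ≤ H x ω) → ∀ ω,
      ∫⁻ t in Set.Ioi (0:ℝ), ENNReal.ofReal (Real.exp (-(a * t))) * A H t ω
      = ENNReal.ofReal (1 / a) *
        ∫⁻ x in Set.Ioi (0:ℝ), ENNReal.ofReal (Real.exp (-(a * H x ω))) := by
    intro a H ha hH hn ω
    have e : ∀ t, ENNReal.ofReal (Real.exp (-(a * t))) * A H t ω
        = ∫⁻ x in Set.Ioi (0:ℝ), ENNReal.ofReal (Real.exp (-(a * t))) *
          (if H x ω ≤ t then (1:ENNReal) else 0) := fun t =>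
      (lintegral_const_mul' _ _ ENNReal.ofReal_ne_top).symm
    simp only [e]
    rw [lintegral_lintegral_swap]
    · rw [← lintegral_const_mul' _ _ ENNReal.ofReal_ne_top]
      exact lintegral_congr fun x => aux_lap ha _ (hn x ω)
    · refine Measurable.aemeasurable (Measurable.mul (by fun_prop) ?_)
      exact (mI H hH).comp ((measurable_fst.prodMk measurable_const).prodMk measurable_snd)
  let E : ℝ → ℝ → ENNReal := fun a t => ENNReal.ofReal (Real.exp (-(a * t)))
  have mEE : ∀ a, Measurable (E a) := fun a => by fun_prop
  let B : ℝ → ℝ → ENNReal := fun t1 t2 => ∫⁻ ω, (E η1 t1 * A H1 t1 ω) * (E η2 t2 * A H2 t2 ω) ∂P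
  have mB3 : Measurable (fun p : (ℝ × ℝ) × Ω =>
      (E η1 p.1.1 * A H1 p.1.1 p.2) * (E η2 p.1.2 * A H2 p.1.2 p.2)) := by
    have a1 := (mA H1 hH1meas).comp
      ((measurable_fst.comp measurable_fst).prodMk measurable_snd : Measurable
        (fun p : (ℝ × ℝ) × Ω => (p.1.1, p.2)))
    have a2 := (mA H2 hH2meas).comp
      ((measurable_snd.comp measurable_fst).prodMk measurable_snd : Measurable
        (fun p : (ℝ × ℝ) × Ω => (p.1.2, p.2)))
    have b1 := (mEE η1).comp (measurable_fst.comp measurable_fst : Measurable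
        (fun p : (ℝ × ℝ) × Ω => p.1.1))
    have b2 := (mEE η2).comp (measurable_snd.comp measurable_fst : Measurable
        (fun p : (ℝ × ℝ) × Ω => p.1.2))
    exact (b1.mul a1).mul (b2.mul a2)
  have mB : Measurable (fun p : ℝ × ℝ => B p.1 p.2) := mB3.lintegral_prod_right'
  have mB' : Measurable (fun t1 => ∫⁻ t2 in Set.Ioi (0:ℝ), B t1 t2) := mB.lintegral_prod_right'
  have hB : ∀ t1 t2, Real.exp (-(η1 * t1) - η2 * t2) * (∫ ω, L1 t1 ω * L2 t2 ω ∂P)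
      = (B t1 t2).toReal := by
    intro t1 t2
    rw [← integral_const_mul, ← integral_toReal]
    · refine integral_congr_ae ?_
      filter_upwards [hA] with ω hω
      simp only [E, (hω t1).1, (hω t2).2, ENNReal.toReal_mul,
        ENNReal.toReal_ofReal (Real.exp_pos _).le, ENNReal.toReal_ofReal (nn1 _ _),
        ENNReal.toReal_ofReal (nn2 _ _)]
      rw [sub_eq_add_neg, Real.exp_add]
      ring
    · exact (mB3.comp (measurable_prodMk_left (x := (t1, t2)))).aemeasurable
    · filter_upwards [hA] with ω hω
      simp only [E, (hω t1).1, (hω t2).2]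
      exact ENNReal.mul_lt_top (ENNReal.mul_lt_top ENNReal.ofReal_lt_top ENNReal.ofReal_lt_top)
        (ENNReal.mul_lt_top ENNReal.ofReal_lt_top ENNReal.ofReal_lt_top)
  have tot : ∫⁻ t1 in Set.Ioi (0:ℝ), ∫⁻ t2 in Set.Ioi (0:ℝ), B t1 t2
      = ENNReal.ofReal ((S η1 0 + S 0 η2) / (η1 * η2 * S η1 0 * S 0 η2 * S η1 η2)) := by
    have s1 : ∀ t1, ∫⁻ t2 in Set.Ioi (0:ℝ), B t1 t2 = ∫⁻ ω, (∫⁻ t2 in Set.Ioi (0:ℝ),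
        (E η1 t1 * A H1 t1 ω) * (E η2 t2 * A H2 t2 ω)) ∂P := by
      intro t1
      refine lintegral_lintegral_swap (Measurable.aemeasurable ?_)
      exact mB3.comp ((measurable_const.prodMk measurable_fst).prodMk measurable_snd :
        Measurable (fun p : ℝ × Ω => ((t1, p.1), p.2)))
    simp only [s1]
    rw [lintegral_lintegral_swap]
    · have mt : ∀ (a : ℝ) (H : ℝ → Ω → ℝ), Measurable (Function.uncurry H) → ∀ ω,
          Measurable (fun t => E a t * A H t ω) := fun a H hH ω =>
        (mEE a).mul ((mA H hH).comp measurable_prodMk_right)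
      have mx : ∀ (a : ℝ) (H : ℝ → Ω → ℝ), Measurable (Function.uncurry H) → ∀ ω,
          Measurable (fun x => ENNReal.ofReal (Real.exp (-(a * H x ω)))) := fun a H hH ω =>
        (mE a H hH).comp measurable_prodMk_right
      have s2 : ∀ ω, ∫⁻ t1 in Set.Ioi (0:ℝ), ∫⁻ t2 in Set.Ioi (0:ℝ),
          (E η1 t1 * A H1 t1 ω) * (E η2 t2 * A H2 t2 ω)
          = ENNReal.ofReal (1 / η1 * (1 / η2)) *
            ∫⁻ x in Set.Ioi (0:ℝ), ∫⁻ y in Set.Ioi (0:ℝ),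
              ENNReal.ofReal (Real.exp (-(η1 * H1 x ω))) *
              ENNReal.ofReal (Real.exp (-(η2 * H2 y ω))) := by
        intro ω
        rw [lintegral_lintegral_mul (mt η1 H1 hH1meas ω).aemeasurable
          (mt η2 H2 hH2meas ω).aemeasurable,
          lintegral_lintegral_mul (mx η1 H1 hH1meas ω).aemeasurable
          (mx η2 H2 hH2meas ω).aemeasurable, lapA η1 H1 hη1 hH1meas hH1nonneg,
          lapA η2 H2 hη2 hH2meas hH2nonneg, ENNReal.ofReal_mul (by positivity)]
        ring
      have mX : Measurable (fun p : (Ω × ℝ) × ℝ =>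
          ENNReal.ofReal (Real.exp (-(η1 * H1 p.1.2 p.1.1))) *
              ENNReal.ofReal (Real.exp (-(η2 * H2 p.2 p.1.1)))) := by
        have a1 := (mE η1 H1 hH1meas).comp
          ((measurable_snd.comp measurable_fst).prodMk (measurable_fst.comp measurable_fst) :
            Measurable (fun p : (Ω × ℝ) × ℝ => (p.1.2, p.1.1)))
        have a2 := (mE η2 H2 hH2meas).comp
          (measurable_snd.prodMk (measurable_fst.comp measurable_fst) :
            Measurable (fun p : (Ω × ℝ) × ℝ => (p.2, p.1.1)))
        exact a1.mul a2
      simp only [s2]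
      rw [lintegral_const_mul' _ _ ENNReal.ofReal_ne_top, lintegral_lintegral_swap]
      · have s3 : ∀ x, ∫⁻ ω, (∫⁻ y in Set.Ioi (0:ℝ),
              ENNReal.ofReal (Real.exp (-(η1 * H1 x ω))) *
              ENNReal.ofReal (Real.exp (-(η2 * H2 y ω)))) ∂P
            = ∫⁻ y in Set.Ioi (0:ℝ), ∫⁻ ω,
              ENNReal.ofReal (Real.exp (-(η1 * H1 x ω))) *
              ENNReal.ofReal (Real.exp (-(η2 * H2 y ω))) ∂P := by
          intro x
          refine lintegral_lintegral_swap (Measurable.aemeasurable ?_)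
          exact mX.comp ((measurable_fst.prodMk measurable_const).prodMk measurable_snd :
            Measurable (fun p : Ω × ℝ => ((p.1, x), p.2)))
        simp only [s3]
        rw [aux_total P H1 H2 S hH1meas hH2meas hzero hindep hincr η1 η2 hη1 hη2 hT1 hT2 hS,
          ← ENNReal.ofReal_mul (by positivity)]
        congr 1
        field_simp
      · exact mX.lintegral_prod_right'.aemeasurable
    · have := mB3.comp ((((measurable_fst.comp measurable_fst).prodMk measurable_snd).prodMk
        (measurable_snd.comp measurable_fst)) :
        Measurable (fun p : (ℝ × Ω) × ℝ => ((p.1.1, p.2), p.1.2)))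
      exact this.lintegral_prod_right'.aemeasurable
  have fin : ∀ᵐ t1 ∂(volume.restrict (Set.Ioi (0:ℝ))),
      ∫⁻ t2 in Set.Ioi (0:ℝ), B t1 t2 < ⊤ :=
    ae_lt_top mB' (by rw [tot]; exact ENNReal.ofReal_ne_top)
  simp only [hB]
  have inner : ∀ᵐ t1 ∂(volume.restrict (Set.Ioi (0:ℝ))),
      ∫ t2 in Set.Ioi (0:ℝ), (B t1 t2).toReal = (∫⁻ t2 in Set.Ioi (0:ℝ), B t1 t2).toReal := by
    filter_upwards [fin] with t1 ht
    have m : Measurable (B t1) := mB.comp measurable_prodMk_left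
    exact integral_toReal m.aemeasurable (ae_lt_top m ht.ne)
  rw [integral_congr_ae inner, integral_toReal mB'.aemeasurable fin, tot,
    ENNReal.toReal_ofReal (by positivity)]
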